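/- Let p be an odd prime, m even, q = p^m, Π perfect nonlinear with Π(0)=0, Π(cx) ≠ cΠ(x) for x ∈ 𝔽_q^*, c ∈ 𝔽_p\{0,1}, and satisfying either p = 3 or (Π⁻¹(0) = {0}, Π weakly regular, and a ↦ Π_a*(0) not surjective). Then C_Π is a 5-weight code with A_0 = 1, A_{(p−1)(p^{m−1}−p^{m/2−1})} = (p^m−1)(p^{m−1}+p^{m/2}−p^{m/2−1})/2, A_{(p−1)p^{m−1}−p^{m/2−1}} = (p^m−1)(p−1)(p^{m−1}+p^{m/2−1})/2, A_{(p−1)p^{m−1}} = p^m−1, A_{(p−1)p^{m−1}+p^{m/2−1}} = (p^m−1)(p−1)(p^{m−1}−p^{m/2−1})/2, A_{(p−1)(p^{m−1}+p^{m/2−1})} = (p^m−1)(p^{m−1}−p^{m/2}+p^{m/2−1})/2, and A_i = 0 otherwise; the minimum distance is (p−1)(p^{m−1}−p^{m/2−1}). -/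

import Mathlib

open Finset

/-- The code `C_Π = {(Tr(aΠ(x)+bx))_{x∈𝔽_q^*} : a,b ∈ 𝔽_q}` as a set of words indexed by
the nonzero elements of `𝔽_q`. -/
def CCode (p : ℕ) [Fact p.Prime] (F : Type*) [Field F] [Fintype F]
    [Algebra (ZMod p) F] (Pl : F → F) : Set ({x : F // x ≠ 0} → ZMod p) :=
  {g | ∃ a b : F, g = fun x => Algebra.trace (ZMod p) F (a * Pl x.1 + b * x.1)}

/-- Hamming weight of a word of length `q - 1`. -/
def wtC (p : ℕ) [Fact p.Prime] (F : Type*) [Field F] [Fintype F] [DecidableEq F]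
    (g : {x : F // x ≠ 0} → ZMod p) : ℕ :=
  (Finset.univ.filter (fun x : {x : F // x ≠ 0} => g x ≠ 0)).card

/-- Number of codewords of `C_Π` of Hamming weight `i`. -/
noncomputable def ACount (p : ℕ) [Fact p.Prime] (F : Type*) [Field F] [Fintype F]
    [DecidableEq F] [Algebra (ZMod p) F] (Pl : F → F) (i : ℕ) : ℕ :=
  Nat.card {g : {x : F // x ≠ 0} → ZMod p | g ∈ CCode p F Pl ∧ wtC p F g = i}

theorem lin_aux (p : ℕ) [Fact p.Prime] (ξ : ℂ) (hξ : IsPrimitiveRoot ξ p) (c : ZMod p → ℤ)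
    (h : ∑ j : ZMod p, (c j : ℂ) * ξ ^ j.val = 0) (i j : ZMod p) : c i = c j := by
  have hp : p.Prime := Fact.out
  let P : Polynomial ℚ := ∑ j : ZMod p, Polynomial.C (c j : ℚ) * Polynomial.X ^ j.val
  have hP : Polynomial.aeval ξ P = 0 := by
    simp only [P, map_sum, map_mul, Polynomial.aeval_C, map_pow, Polynomial.aeval_X]
    rw [← h]; simp
  have hdvd : Polynomial.cyclotomic p ℚ ∣ P := by
    rw [Polynomial.cyclotomic_eq_minpoly_rat hξ hp.pos]
    exact minpoly.dvd ℚ ξ hP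
  have hco : ∀ j : ZMod p, P.coeff j.val = c j := by
    intro j
    simp only [P, Polynomial.finsetSum_coeff, Polynomial.coeff_C_mul, Polynomial.coeff_X_pow]
    rw [Finset.sum_eq_single j]
    · simp
    · intro b _ hb
      have : j.val ≠ b.val := fun h => hb (ZMod.val_injective p h).symm
      simp [this]
    · simp
  have hdeg : P.natDegree ≤ p - 1 := by
    apply Polynomial.natDegree_sum_le_of_forall_le
    intro j _
    refine (Polynomial.natDegree_C_mul_X_pow_le _ _).trans ?_
    have := ZMod.val_lt j
    omega
  obtain ⟨g, hg⟩ := hdvd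
  have hg0 : g.natDegree = 0 := by
    by_cases hz : g = 0
    · simp [hz]
    · have := Polynomial.natDegree_mul (Polynomial.cyclotomic_ne_zero p ℚ) hz
      rw [← hg, Polynomial.natDegree_cyclotomic, Nat.totient_prime hp] at this
      omega
  rw [Polynomial.natDegree_eq_zero] at hg0
  obtain ⟨d, rfl⟩ := hg0
  have key : ∀ j : ZMod p, (c j : ℚ) = d := by
    intro j
    rw [← hco j, hg, Polynomial.coeff_mul_C, Polynomial.cyclotomic_prime]
    simp [Polynomial.finsetSum_coeff, Polynomial.coeff_X_pow, ZMod.val_lt j]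
  have := (key i).trans (key j).symm
  exact_mod_cast this

theorem fib_aux (p : ℕ) [Fact p.Prime] (ξ : ℂ) (hξ : IsPrimitiveRoot ξ p) {ι : Type*}
    (S : Finset ι) (w : ι → ℤ) (f : ι → ZMod p) (R : ℤ) (k : ZMod p)
    (h : ∑ i ∈ S, (w i : ℂ) * ξ ^ (f i).val = R * ξ ^ k.val) (j : ZMod p) :
    (p : ℤ) * ∑ i ∈ S with f i = j, w i = ∑ i ∈ S, w i - R + (if j = k then p * R else 0) := by
  have h1 : ∑ j : ZMod p, (((∑ i ∈ S with f i = j, w i) - (if j = k then R else 0) : ℤ) : ℂ)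
      * ξ ^ j.val = 0 := by
    have e1 : ∑ j : ZMod p, (∑ i ∈ S with f i = j, (w i : ℂ)) * ξ ^ j.val
        = ∑ i ∈ S, (w i : ℂ) * ξ ^ (f i).val := by
      rw [← Finset.sum_fiberwise S f]
      refine Finset.sum_congr rfl fun j _ => ?_
      rw [Finset.sum_mul]
      refine Finset.sum_congr rfl fun i hi => ?_
      rw [(Finset.mem_filter.1 hi).2]
    push_cast
    simp only [sub_mul, Finset.sum_sub_distrib]
    rw [e1, h]
    simp
  have h2 := lin_aux p ξ hξ _ h1
  have h3 : ∑ j' : ZMod p, ((∑ i ∈ S with f i = j', w i) - (if j' = k then R else 0))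
      = p * ((∑ i ∈ S with f i = j, w i) - (if j = k then R else 0)) := by
    rw [Finset.sum_congr rfl (fun j' _ => h2 j' j)]
    rw [Finset.sum_const, Finset.card_univ, ZMod.card, nsmul_eq_mul]
  rw [Finset.sum_sub_distrib, Finset.sum_fiberwise S f] at h3
  simp only [Finset.sum_ite_eq', Finset.mem_univ, if_true] at h3
  split_ifs at h3 ⊢ <;> linarith

theorem count_aux (p : ℕ) [Fact p.Prime] (hp2 : p ≠ 2) (ξ : ℂ) (hξ : IsPrimitiveRoot ξ p) {ι : Type*}
    (S : Finset ι) (e : ι → ℤ) (k : ι → ZMod p) (R : ℤ)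
    (he : ∀ i ∈ S, e i = 1 ∨ e i = -1)
    (h1 : ∑ i ∈ S, (e i : ℂ) * ξ ^ (k i).val = R)
    (h2 : ∑ i ∈ S, ξ ^ (2 * k i).val = 0)
    (h3 : ∑ i ∈ S, e i = 0) :
    2 * p * (#{i ∈ S | e i = 1 ∧ k i = 0} : ℤ) = #S + (p - 1) * R ∧
    2 * p * (#{i ∈ S | e i = -1 ∧ k i = 0} : ℤ) = #S - (p - 1) * R ∧
    2 * p * (#{i ∈ S | e i = 1 ∧ k i ≠ 0} : ℤ) = (p - 1) * #S - (p - 1) * R ∧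
    2 * p * (#{i ∈ S | e i = -1 ∧ k i ≠ 0} : ℤ) = (p - 1) * #S + (p - 1) * R := by
  have a1 := fib_aux p ξ hξ S e k R 0 (by simpa using h1) 0
  have a2 := fib_aux p ξ hξ S (fun _ => 1) (fun i => 2 * k i) 0 0 (by simpa using h2) 0
  have h20 : (2 : ZMod p) ≠ 0 := by
    intro h
    have : ((2 : ℕ) : ZMod p) = 0 := by exact_mod_cast h
    rw [ZMod.natCast_eq_zero_iff] at this
    exact hp2 ((Nat.prime_dvd_prime_iff_eq Fact.out Nat.prime_two).1 this)
  simp only [mul_eq_zero, h20, false_or] at a2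
  have c : ∀ (P : ι → Prop) [DecidablePred P], 
      (#{i ∈ S | P i} : ℤ) = ∑ i ∈ S, if P i then 1 else 0 := by
    intro P _; simp
  simp only [Finset.sum_filter] at a1 a2
  have b1 : ∀ i ∈ S, 2 * (if e i = 1 ∧ k i = 0 then (1:ℤ) else 0) = (if k i = 0 then 1 else 0) + (if k i = 0 then e i else 0) := by
    intro i hi
    rcases he i hi with h | h <;> simp [h] <;> split_ifs <;> simp
  have b2 : ∀ i ∈ S, 2 * (if e i = -1 ∧ k i = 0 then (1:ℤ) else 0) = (if k i = 0 then 1 else 0) - (if k i = 0 then e i else 0) := by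
    intro i hi
    rcases he i hi with h | h <;> simp [h] <;> split_ifs <;> simp
  have b3 : ∀ i ∈ S, 2 * (if e i = 1 ∧ k i ≠ 0 then (1:ℤ) else 0) = 1 + e i - ((if k i = 0 then 1 else 0) + (if k i = 0 then e i else 0)) := by
    intro i hi
    rcases he i hi with h | h <;> simp [h] <;> split_ifs <;> simp
  have b4 : ∀ i ∈ S, 2 * (if e i = -1 ∧ k i ≠ 0 then (1:ℤ) else 0) = 1 - e i - ((if k i = 0 then 1 else 0) - (if k i = 0 then e i else 0)) := by
    intro i hi
    rcases he i hi with h | h <;> simp [h] <;> split_ifs <;> simp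
  have d1 := Finset.sum_congr rfl b1
  have d2 := Finset.sum_congr rfl b2
  have d3 := Finset.sum_congr rfl b3
  have d4 := Finset.sum_congr rfl b4
  simp only [← Finset.mul_sum, Finset.sum_add_distrib, Finset.sum_sub_distrib, ← c] at d1 d2 d3 d4
  simp only [← c] at a1 a2
  simp at a1 a2 d3 d4
  rw [h3] at a1 d3 d4
  refine ⟨?_, ?_, ?_, ?_⟩
  · linear_combination (p:ℤ) * d1 + a1 + a2
  · linear_combination (p:ℤ) * d2 - a1 + a2
  · linear_combination (p:ℤ) * d3 - a1 - a2
  · linear_combination (p:ℤ) * d4 + a1 - a2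

theorem orth_aux (p : ℕ) [Fact p.Prime] (F : Type*) [Field F] [Fintype F] [DecidableEq F]
    [Algebra (ZMod p) F] (ξ : ℂ) (hξ : IsPrimitiveRoot ξ p) (χ : AddChar (ZMod p) ℂ)
    (hχ : ∀ j, χ j = ξ ^ j.val) (b : F) :
    ∑ x : F, χ (Algebra.trace (ZMod p) F (b * x)) = if b = 0 then (Fintype.card F : ℂ) else 0 := by
  split_ifs with hb
  · simp [hb]
  · have hnd := (traceForm_nondegenerate (ZMod p) F).1 b
    simp_rw [Algebra.traceForm_apply] at hnd
    have hex : ∃ y, Algebra.trace (ZMod p) F (b * y) ≠ 0 := by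
      by_contra! hf
      exact hb (hnd hf)
    obtain ⟨y, hy⟩ := hex
    have hne : χ (Algebra.trace (ZMod p) F (b * y)) ≠ 1 := by
      rw [hχ]
      intro h
      rw [hξ.pow_eq_one_iff_dvd] at h
      have h1 := Nat.eq_zero_of_dvd_of_lt h (ZMod.val_lt _)
      rw [ZMod.val_eq_zero] at h1
      exact hy h1
    have h1 : ∑ x : F, χ (Algebra.trace (ZMod p) F (b * (y + x)))
        = ∑ x : F, χ (Algebra.trace (ZMod p) F (b * x)) :=
      Fintype.sum_bijective _ (AddGroup.addLeft_bijective y) _ _ fun x => rfl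
    simp_rw [mul_add, map_add, AddChar.map_add_eq_mul] at h1
    rw [← Finset.mul_sum] at h1
    exact eq_zero_of_mul_eq_self_left hne h1

theorem moment_aux (p : ℕ) [Fact p.Prime] (F : Type*) [Field F] [Fintype F] [DecidableEq F]
    [Algebra (ZMod p) F] (ξ : ℂ) (hξ : IsPrimitiveRoot ξ p) (χ : AddChar (ZMod p) ℂ)
    (hχ : ∀ j, χ j = ξ ^ j.val) {T : Type*} [Fintype T] (A B : T → F) :
    ∑ a : F, ∑ b : F, ∑ t : T, χ (Algebra.trace (ZMod p) F (a * A t + b * B t))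
      = (Fintype.card F : ℂ) ^ 2 * #{t : T | A t = 0 ∧ B t = 0} := by
  have e1 : ∀ t : T, ∑ a : F, ∑ b : F, χ (Algebra.trace (ZMod p) F (a * A t + b * B t))
      = if A t = 0 ∧ B t = 0 then (Fintype.card F : ℂ) ^ 2 else 0 := by
    intro t
    simp_rw [map_add, AddChar.map_add_eq_mul, ← Finset.mul_sum, ← Finset.sum_mul,
      mul_comm _ (A t), mul_comm _ (B t), orth_aux p F ξ hξ χ hχ]
    split_ifs <;> simp_all [sq]
  simp_rw [Finset.sum_comm (s := (Finset.univ : Finset F)) (t := (Finset.univ : Finset T))]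
  rw [Finset.sum_congr rfl fun t _ => e1 t, ← Finset.sum_filter]
  simp [mul_comm]

theorem norm_aux (p : ℕ) [Fact p.Prime] (F : Type*) [Field F] [Fintype F] [DecidableEq F]
    [Algebra (ZMod p) F] (ξ : ℂ) (hξ : IsPrimitiveRoot ξ p) (χ : AddChar (ZMod p) ℂ)
    (hχ : ∀ j, χ j = ξ ^ j.val) (Pl : F → F)
    (hPN : ∀ a : F, a ≠ 0 → Function.Bijective (fun x : F => Pl (x + a) - Pl x))
    (a b : F) (ha : a ≠ 0) :
    (∑ x : F, χ (Algebra.trace (ZMod p) F (a * Pl x + b * x))) *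
     (∑ x : F, χ (-Algebra.trace (ZMod p) F (a * Pl x + b * x))) = Fintype.card F := by
  rw [Finset.sum_mul_sum, Finset.sum_comm]
  have e1 : ∀ y : F, ∑ x : F, χ (Algebra.trace (ZMod p) F (a * Pl x + b * x)) *
      χ (-Algebra.trace (ZMod p) F (a * Pl y + b * y)) =
      ∑ d : F, χ (Algebra.trace (ZMod p) F (b * d)) *
        χ (Algebra.trace (ZMod p) F (a * (Pl (y + d) - Pl y))) := by
    intro y
    symm
    refine Fintype.sum_bijective _ (AddGroup.addLeft_bijective y) _ _ fun d => ?_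
    rw [← AddChar.map_add_eq_mul, ← AddChar.map_add_eq_mul, ← map_neg, ← map_add, ← map_add]
    congr 2
    ring
  rw [Finset.sum_congr rfl fun y _ => e1 y, Finset.sum_comm, Finset.sum_eq_single 0]
  · simp
  · intro d _ hd
    rw [← Finset.mul_sum]
    have := Fintype.sum_bijective _ (hPN d hd)
      (fun y => χ (Algebra.trace (ZMod p) F (a * (Pl (y + d) - Pl y))))
      (fun x => χ (Algebra.trace (ZMod p) F (a * x))) (fun _ => rfl)
    rw [this, orth_aux p F ξ hξ χ hχ, if_neg ha, mul_zero]
  · simp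

theorem eisen_aux (n : ℕ) : ∀ u v : ℤ, u ^ 2 - u * v + v ^ 2 = 9 ^ n →
    ∃ e : ℤ, (e = 1 ∨ e = -1) ∧ ((u = e * 3 ^ n ∧ v = 0) ∨ (u = 0 ∧ v = e * 3 ^ n) ∨
      (u = - e * 3 ^ n ∧ v = - e * 3 ^ n)) := by
  induction n with
  | zero =>
    intro u v h
    simp only [pow_zero, mul_one] at h ⊢
    have hu : u ^ 2 ≤ 1 := by nlinarith [sq_nonneg (2 * v - u)]
    have hv : v ^ 2 ≤ 1 := by nlinarith [sq_nonneg (2 * u - v)]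
    have hu1 : u ≤ 1 := by nlinarith
    have hu2 : -1 ≤ u := by nlinarith
    have hv1 : v ≤ 1 := by nlinarith
    have hv2 : -1 ≤ v := by nlinarith
    interval_cases u <;> interval_cases v <;> simp at h ⊢
  | succ n ih =>
    intro u v h
    have h3 : (3 : ℤ) ∣ (u + v) ^ 2 := ⟨3 * 9 ^ n + u * v, by rw [pow_succ 9 n] at h; linarith⟩
    have h3' : (3 : ℤ) ∣ u + v := Int.prime_three.dvd_of_dvd_pow h3
    obtain ⟨w, hw⟩ := h3'
    obtain rfl : v = 3 * w - u := by linarith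
    have h4 : (3 : ℤ) ∣ u ^ 2 := ⟨9 ^ n - w ^ 2 + w * u, by rw [pow_succ 9 n] at h; linarith⟩
    obtain ⟨z, rfl⟩ := Int.prime_three.dvd_of_dvd_pow h4
    obtain ⟨e, he, hh⟩ := ih z (w - z) (by rw [pow_succ 9 n] at h; linarith)
    refine ⟨e, he, ?_⟩
    rw [pow_succ]
    rcases hh with ⟨h1, h2⟩ | ⟨h1, h2⟩ | ⟨h1, h2⟩
    · left; constructor <;> linarith
    · right; left; constructor <;> linarith
    · right; right; constructor <;> linarith

/-- for `p = 3` the exponential sums are `± ξ^k 3^n`. -/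
theorem three_aux [Fact (Nat.Prime 3)] (n : ℕ) (F : Type*) [Fintype F]
    (ξ : ℂ) (hξ : IsPrimitiveRoot ξ 3) (χ : AddChar (ZMod 3) ℂ)
    (hχ : ∀ j, χ j = ξ ^ j.val) (f : F → ZMod 3)
    (h : (∑ x : F, χ (f x)) * (∑ x : F, χ (- f x)) = 9 ^ n) :
    ∃ (e : ℤ) (k : ZMod 3), (e = 1 ∨ e = -1) ∧ ∑ x : F, χ (f x) = e * χ k * 3 ^ n := by
  have fib : ∀ g : ZMod 3 → ℂ, ∑ x : F, g (f x) =
      ∑ j : ZMod 3, (#{x : F | f x = j} : ℂ) * g j := by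
    intro g
    rw [← Finset.sum_fiberwise Finset.univ f]
    refine Finset.sum_congr rfl fun j _ => ?_
    have : ∀ i ∈ Finset.univ.filter (fun x => f x = j), g (f i) = g j := by
      intro i hi
      rw [(Finset.mem_filter.1 hi).2]
    rw [Finset.sum_congr rfl this]
    simp
  have u3 : ∀ g : ZMod 3 → ℂ, ∑ j : ZMod 3, g j = g 0 + g 1 + g 2 := fun g => Fin.sum_univ_three g
  have c0 : χ 0 = 1 := by simp
  have c1 : χ 1 = ξ := by rw [hχ]; exact pow_one ξ
  have c2 : χ 2 = ξ ^ 2 := by rw [hχ]; rfl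
  have n1 : (-1 : ZMod 3) = 2 := rfl
  have n2 : (-2 : ZMod 3) = 1 := rfl
  have hs : 1 + ξ + ξ ^ 2 = 0 := by
    have := hξ.geom_sum_eq_zero (by norm_num)
    simpa [Finset.sum_range_succ] using this
  have x3 : ξ ^ 3 = 1 := hξ.pow_eq_one
  rw [fib χ, fib (fun j => χ (-j)), u3, u3, neg_zero, n1, n2, c0, c1, c2] at h
  rw [fib χ, u3, c0, c1, c2]
  set N0 := #{x : F | f x = 0}
  set N1 := #{x : F | f x = 1}
  set N2 := #{x : F | f x = 2}
  have hx2 : ξ ^ 2 = -1 - ξ := by linear_combination hs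
  have hint : (((N0 : ℤ) - N2) ^ 2 - ((N0 : ℤ) - N2) * ((N1 : ℤ) - N2) + ((N1 : ℤ) - N2) ^ 2)
      = 9 ^ n := by
    have : ((((N0 : ℤ) - N2) ^ 2 - ((N0 : ℤ) - N2) * ((N1 : ℤ) - N2) + ((N1 : ℤ) - N2) ^ 2 : ℤ) : ℂ)
      = ((9 ^ n : ℤ) : ℂ) := by
      push_cast
      rw [← h, hx2]
      linear_combination (-((N1:ℂ)- N2) ^ 2) * (-1) * hs
    exact_mod_cast this
  obtain ⟨e, he, hh⟩ := eisen_aux n _ _ hint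
  have key : (N0 : ℂ) * 1 + N1 * ξ + N2 * ξ ^ 2 = (((N0 : ℤ) - N2 : ℤ) : ℂ) + (((N1 : ℤ) - N2 : ℤ) : ℂ) * ξ := by
    push_cast
    rw [hx2]; ring
  rcases hh with ⟨h1, h2⟩ | ⟨h1, h2⟩ | ⟨h1, h2⟩
  · refine ⟨e, 0, he, ?_⟩
    rw [key, h1, h2, c0]; push_cast; ring
  · refine ⟨e, 1, he, ?_⟩
    rw [key, h1, h2, c1]; push_cast; ring
  · refine ⟨e, 2, he, ?_⟩
    rw [key, h1, h2, c2, hx2]; push_cast; ring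

theorem split_aux {F : Type*} [Field F] [Fintype F] [DecidableEq F] (G : F → F → ℂ) :
    ∑ z : F × F with z.1 ≠ 0, G z.1 z.2 = (∑ a : F, ∑ b : F, G a b) - ∑ b : F, G 0 b := by
  rw [Finset.sum_filter, Fintype.sum_prod_type, eq_sub_iff_add_eq]
  rw [← Finset.add_sum_erase Finset.univ (fun a => ∑ b : F, G a b) (Finset.mem_univ (0 : F)),
    ← Finset.add_sum_erase Finset.univ (fun a => ∑ b : F, if (a, b).1 ≠ 0 then G (a, b).1 (a, b).2
      else 0) (Finset.mem_univ (0 : F))]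
  simp only [ne_eq, not_true_eq_false, if_false, Finset.sum_const_zero, zero_add]
  rw [add_comm]
  congr 1
  refine Finset.sum_congr rfl fun a ha => ?_
  simp [(Finset.mem_erase.1 ha).1]

theorem zero_aux (p : ℕ) [Fact p.Prime] (F : Type*) [Field F] [Fintype F] [DecidableEq F]
    [Algebra (ZMod p) F] (ξ : ℂ) (hξ : IsPrimitiveRoot ξ p) (χ : AddChar (ZMod p) ℂ)
    (hχ : ∀ j, χ j = ξ ^ j.val) (Pl : F → F) (n : ℕ) (hn : n ≠ 0) :
    ∑ b : F, (∑ x : F, χ (Algebra.trace (ZMod p) F (0 * Pl x + b * x))) ^ n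
      = (Fintype.card F : ℂ) ^ n := by
  simp_rw [zero_mul, zero_add, orth_aux p F ξ hξ χ hχ]
  simp [ite_pow, hn]

theorem sum1_aux (p : ℕ) [Fact p.Prime] (F : Type*) [Field F] [Fintype F] [DecidableEq F]
    [Algebra (ZMod p) F] (ξ : ℂ) (hξ : IsPrimitiveRoot ξ p) (χ : AddChar (ZMod p) ℂ)
    (hχ : ∀ j, χ j = ξ ^ j.val) (Pl : F → F) (h0 : Pl 0 = 0) :
    ∑ z : F × F with z.1 ≠ 0, ∑ x : F, χ (Algebra.trace (ZMod p) F (z.1 * Pl x + z.2 * x))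
      = (Fintype.card F : ℂ) ^ 2 - Fintype.card F := by
  rw [split_aux (fun a b => ∑ x : F, χ (Algebra.trace (ZMod p) F (a * Pl x + b * x))),
    moment_aux p F ξ hξ χ hχ Pl (fun x => x)]
  have := zero_aux p F ξ hξ χ hχ Pl 1 one_ne_zero
  simp only [pow_one] at this
  rw [this]
  have : ({t : F | Pl t = 0 ∧ t = 0} : Finset F) = {0} := by
    ext t; simp only [Finset.mem_filter, Finset.mem_univ, true_and, Finset.mem_singleton]
    constructor
    · exact fun h => h.2
    · rintro rfl; exact ⟨h0, rfl⟩
  rw [this]; simp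

theorem sum2_aux (p : ℕ) [Fact p.Prime] (hp2 : p ≠ 2) (F : Type*) [Field F] [Fintype F]
    [DecidableEq F]
    [Algebra (ZMod p) F] (ξ : ℂ) (hξ : IsPrimitiveRoot ξ p) (χ : AddChar (ZMod p) ℂ)
    (hχ : ∀ j, χ j = ξ ^ j.val) (Pl : F → F) (h0 : Pl 0 = 0)
    (hhom : ∀ x : F, x ≠ 0 → ∀ c : ZMod p, c ≠ 0 → c ≠ 1 →
      Pl (algebraMap (ZMod p) F c * x) ≠ algebraMap (ZMod p) F c * Pl x) :
    ∑ z : F × F with z.1 ≠ 0, (∑ x : F, χ (Algebra.trace (ZMod p) F (z.1 * Pl x + z.2 * x))) ^ 2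
      = 0 := by
  rw [split_aux (fun a b => (∑ x : F, χ (Algebra.trace (ZMod p) F (a * Pl x + b * x))) ^ 2),
    zero_aux p F ξ hξ χ hχ Pl 2 two_ne_zero]
  have e : ∀ a b : F, (∑ x : F, χ (Algebra.trace (ZMod p) F (a * Pl x + b * x))) ^ 2
      = ∑ t : F × F, χ (Algebra.trace (ZMod p) F (a * (Pl t.1 + Pl t.2) + b * (t.1 + t.2))) := by
    intro a b
    rw [sq, Finset.sum_mul_sum, Fintype.sum_prod_type]
    refine Finset.sum_congr rfl fun x _ => Finset.sum_congr rfl fun y _ => ?_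
    rw [← AddChar.map_add_eq_mul, ← map_add]
    congr 2; ring
  simp_rw [e]
  rw [moment_aux p F ξ hξ χ hχ (fun t : F × F => Pl t.1 + Pl t.2) (fun t => t.1 + t.2)]
  have : ({t : F × F | Pl t.1 + Pl t.2 = 0 ∧ t.1 + t.2 = 0} : Finset (F × F)) = {0} := by
    ext ⟨x, y⟩; simp only [Finset.mem_filter, Finset.mem_univ, true_and, Finset.mem_singleton]
    constructor
    · rintro ⟨h1, h2⟩
      obtain rfl : y = -x := by linear_combination h2
      by_cases hx : x = 0
      · subst hx; simp
      · exfalso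
        refine hhom x hx (-1) (by simp) ?_ ?_
        · have : Fact (2 < p) := ⟨lt_of_le_of_ne (Nat.Prime.two_le Fact.out) (Ne.symm hp2)⟩
          exact ZMod.neg_one_ne_one
        · rw [map_neg, map_one, neg_one_mul, neg_one_mul]
          linear_combination h1
    · intro h
      obtain ⟨rfl, rfl⟩ := Prod.mk.inj h
      simp [h0]
  rw [this]; simp

theorem sum3_aux [Fact (Nat.Prime 3)] (F : Type*) [Field F] [Fintype F] [DecidableEq F]
    [Algebra (ZMod 3) F] (ξ : ℂ) (hξ : IsPrimitiveRoot ξ 3) (χ : AddChar (ZMod 3) ℂ)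
    (hχ : ∀ j, χ j = ξ ^ j.val) (Pl : F → F)
    (hPN : ∀ a : F, a ≠ 0 → Function.Bijective (fun x : F => Pl (x + a) - Pl x)) :
    ∑ z : F × F with z.1 ≠ 0, (∑ x : F, χ (Algebra.trace (ZMod 3) F (z.1 * Pl x + z.2 * x))) ^ 3
      = 0 := by
  have h3 : (3 : F) = 0 := by
    have : ((3 : ℕ) : F) = algebraMap (ZMod 3) F ((3 : ℕ) : ZMod 3) := (map_natCast _ 3).symm
    rw [ZMod.natCast_self, map_zero] at this
    exact_mod_cast this
  rw [split_aux (fun a b => (∑ x : F, χ (Algebra.trace (ZMod 3) F (a * Pl x + b * x))) ^ 3),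
    zero_aux 3 F ξ hξ χ hχ Pl 3 three_ne_zero]
  have e : ∀ a b : F, (∑ x : F, χ (Algebra.trace (ZMod 3) F (a * Pl x + b * x))) ^ 3
      = ∑ t : F × F × F, χ (Algebra.trace (ZMod 3) F (a * (Pl t.1 + (Pl t.2.1 + Pl t.2.2))
        + b * (t.1 + (t.2.1 + t.2.2)))) := by
    intro a b
    rw [pow_succ', sq, Finset.sum_mul_sum, Finset.sum_mul_sum, Fintype.sum_prod_type]
    refine Finset.sum_congr rfl fun x _ => ?_
    rw [Fintype.sum_prod_type]
    refine Finset.sum_congr rfl fun y _ => ?_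
    rw [Finset.mul_sum]
    refine Finset.sum_congr rfl fun z _ => ?_
    rw [← AddChar.map_add_eq_mul, ← AddChar.map_add_eq_mul, ← map_add, ← map_add]
    congr 2; ring
  simp_rw [e]
  rw [moment_aux 3 F ξ hξ χ hχ (fun t : F × F × F => Pl t.1 + (Pl t.2.1 + Pl t.2.2))
    (fun t => t.1 + (t.2.1 + t.2.2))]
  have : ({t : F × F × F | Pl t.1 + (Pl t.2.1 + Pl t.2.2) = 0 ∧ t.1 + (t.2.1 + t.2.2) = 0} :
      Finset (F × F × F)) = Finset.univ.image (fun x : F => (x, x, x)) := by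
    ext ⟨x, y, z⟩
    simp only [Finset.mem_filter, Finset.mem_univ, true_and, Finset.mem_image]
    constructor
    · rintro ⟨h1, h2⟩
      refine ⟨x, ?_⟩
      by_cases hd : y - x = 0
      · obtain rfl : y = x := by linear_combination hd
        obtain rfl : z = y := by linear_combination h2 - y * h3
        rfl
      · exfalso
        apply hd
        have := (hPN (y - x) hd).1 (a₁ := y) (a₂ := x) (by
          have hy : y + (y - x) = z := by linear_combination -h2 + y * h3
          have hx : x + (y - x) = y := by ring
          simp only [hy, hx]
          linear_combination h1 - Pl y * h3)
        rw [this, sub_self]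
    · rintro ⟨w, hw⟩
      simp only [Prod.mk.injEq] at hw
      obtain ⟨rfl, rfl, rfl⟩ := hw
      constructor
      · linear_combination Pl w * h3
      · linear_combination w * h3
  rw [this, Finset.card_image_of_injective _ (fun x y h => (Prod.mk.inj h).1), Finset.card_univ]
  ring

theorem data_aux (p t : ℕ) [Fact p.Prime]
    (F : Type*) [Field F] [Fintype F] [DecidableEq F] [Algebra (ZMod p) F]
    (hF : Fintype.card F = p ^ (2 * (t + 1)))
    (ξ : ℂ) (hξ : IsPrimitiveRoot ξ p) (χ : AddChar (ZMod p) ℂ)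
    (hχ : ∀ j, χ j = ξ ^ j.val) (Pl : F → F)
    (hPN : ∀ a : F, a ≠ 0 → Function.Bijective (fun x : F => Pl (x + a) - Pl x))
    (h0 : Pl 0 = 0)
    (hcond : p = 3 ∨
      ((∀ x : F, Pl x = 0 → x = 0) ∧
        ∃ (ε : F → ℤ) (D : F → F → ZMod p),
          (∀ a : F, a ≠ 0 → (ε a = 1 ∨ ε a = -1) ∧
            ∀ y : F, ∑ x : F,
                ξ ^ (Algebra.trace (ZMod p) F (a * Pl x)
                  + Algebra.trace (ZMod p) F (y * x)).val
              = (ε a : ℂ) * ξ ^ (D a y).val * Real.sqrt (p ^ (2 * (t + 1)))) ∧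
          ∃ r : ZMod p, ∀ a : F, a ≠ 0 → D a 0 ≠ r)) :
    ∃ (e : F × F → ℤ) (k : F × F → ZMod p),
      (∀ z : F × F, z.1 ≠ 0 → (e z = 1 ∨ e z = -1) ∧
        ∑ x : F, χ (Algebra.trace (ZMod p) F (z.1 * Pl x + z.2 * x))
          = (e z : ℂ) * χ (k z) * p ^ (t + 1)) ∧
      ∑ z : F × F with z.1 ≠ 0, e z = 0 := by
  have hp : p.Prime := Fact.out
  have hp0 : (p : ℂ) ≠ 0 := by exact_mod_cast hp.ne_zero
  rcases hcond with rfl | ⟨hz, ε, D, hD, r, hr⟩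
  · have hex : ∀ z : F × F, ∃ (e : ℤ) (k : ZMod 3), z.1 ≠ 0 → (e = 1 ∨ e = -1) ∧
        ∑ x : F, χ (Algebra.trace (ZMod 3) F (z.1 * Pl x + z.2 * x))
          = (e : ℂ) * χ k * 3 ^ (t + 1) := by
      intro z
      by_cases hz : z.1 = 0
      · exact ⟨0, 0, fun h => absurd hz h⟩
      · obtain ⟨e, k, h⟩ := three_aux (t + 1) F ξ hξ χ hχ
          (fun x => Algebra.trace (ZMod 3) F (z.1 * Pl x + z.2 * x)) (by
            rw [norm_aux 3 F ξ hξ χ hχ Pl hPN z.1 z.2 hz, hF, pow_mul]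
            norm_num)
        exact ⟨e, k, fun _ => h⟩
    choose e k hek using hex
    refine ⟨e, k, by exact_mod_cast hek, ?_⟩
    have h3 := sum3_aux F ξ hξ χ hχ Pl hPN
    have : ∀ z ∈ Finset.univ.filter (fun z : F × F => z.1 ≠ 0),
        (∑ x : F, χ (Algebra.trace (ZMod 3) F (z.1 * Pl x + z.2 * x))) ^ 3
        = (e z : ℂ) * (3 ^ (t + 1)) ^ 3 := by
      intro z hz
      obtain ⟨h1, h2⟩ := hek z (Finset.mem_filter.1 hz).2
      have hc : χ (k z) ^ 3 = 1 := by
        rw [hχ, ← pow_mul, mul_comm, pow_mul, hξ.pow_eq_one, one_pow]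
      rw [h2, mul_pow, mul_pow, hc]
      rcases h1 with h | h <;> rw [h] <;> norm_num
    rw [Finset.sum_congr rfl this, ← Finset.sum_mul] at h3
    have h4 := (mul_eq_zero.1 h3).resolve_right (by positivity)
    exact_mod_cast h4
  · have hsq : ((Real.sqrt ((p : ℝ) ^ (2 * (t + 1))) : ℝ) : ℂ) = (p : ℂ) ^ (t + 1) := by
      rw [mul_comm 2, pow_mul, Real.sqrt_sq (by positivity)]
      push_cast; rfl
    have hD' : ∀ z : F × F, z.1 ≠ 0 → (ε z.1 = 1 ∨ ε z.1 = -1) ∧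
        ∑ x : F, χ (Algebra.trace (ZMod p) F (z.1 * Pl x + z.2 * x))
          = (ε z.1 : ℂ) * χ (D z.1 z.2) * p ^ (t + 1) := by
      intro z hz
      refine ⟨(hD z.1 hz).1, ?_⟩
      have := (hD z.1 hz).2 z.2
      rw [hsq] at this
      simp_rw [hχ, map_add]
      exact this
    refine ⟨fun z => ε z.1, fun z => D z.1 z.2, hD', ?_⟩
    have s1 : ∑ a : F, ∑ x : F, χ (Algebra.trace (ZMod p) F (a * Pl x + 0 * x))
        = Fintype.card F := by
      rw [Finset.sum_comm, Finset.sum_eq_single 0]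
      · simp [h0]
      · intro x _ hx
        simp_rw [zero_mul, add_zero, mul_comm _ (Pl x)]
        rw [orth_aux p F ξ hξ χ hχ, if_neg (fun h => hx (hz x h))]
      · simp
    rw [← Finset.add_sum_erase _ _ (Finset.mem_univ (0 : F))] at s1
    have s2 : ∑ a ∈ Finset.univ.erase (0 : F), (ε a : ℂ) * ξ ^ (D a 0).val = 0 := by
      have : ∀ a ∈ Finset.univ.erase (0 : F),
          ∑ x : F, χ (Algebra.trace (ZMod p) F (a * Pl x + 0 * x))
            = (ε a : ℂ) * ξ ^ (D a 0).val * p ^ (t + 1) := by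
        intro a ha
        rw [← hχ]
        exact (hD' (a, 0) (Finset.mem_erase.1 ha).1).2
      rw [Finset.sum_congr rfl this, ← Finset.sum_mul] at s1
      have s1' : (∑ a ∈ Finset.univ.erase (0 : F), (ε a : ℂ) * ξ ^ (D a 0).val) * p ^ (t + 1)
          = 0 := by
        simpa only [zero_mul, add_zero, map_zero, AddChar.map_zero_eq_one, Finset.sum_const,
          nsmul_eq_mul, mul_one, Finset.card_univ, add_eq_left] using s1
      exact (mul_eq_zero.1 s1').resolve_right (pow_ne_zero _ hp0)
    have s3 := fib_aux p ξ hξ (Finset.univ.erase (0 : F)) ε (fun a => D a 0) 0 0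
      (by simpa using s2) r
    rw [Finset.filter_eq_empty_iff.2 (fun a ha => hr a (Finset.mem_erase.1 ha).1)] at s3
    simp at s3
    rw [Finset.sum_filter, Fintype.sum_prod_type, ← Finset.add_sum_erase _ _ (Finset.mem_univ (0 : F))]
    have : ∀ a ∈ Finset.univ.erase (0 : F), ∑ b : F, (if ((a, b) : F × F).1 ≠ 0 then ε ((a, b) : F × F).1 else 0)
        = Fintype.card F * ε a := by
      intro a ha
      simp [(Finset.mem_erase.1 ha).1]
    rw [Finset.sum_congr rfl this, ← Finset.mul_sum]
    simp
    linarith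

theorem wt_aux (p : ℕ) [Fact p.Prime] (F : Type*) [Field F] [Fintype F] [DecidableEq F]
    (ξ : ℂ) (hξ : IsPrimitiveRoot ξ p) (χ : AddChar (ZMod p) ℂ)
    (hχ : ∀ j, χ j = ξ ^ j.val) (f : F → ZMod p) (hf : f 0 = 0) (R : ℤ) (k : ZMod p)
    (h : ∑ x : F, χ (f x) = R * χ k) :
    (p : ℤ) * wtC p F (fun x => f x.1) =
      p * Fintype.card F - Fintype.card F + R - (if k = 0 then p * R else 0) := by
  simp_rw [hχ] at h
  have h1 := fib_aux p ξ hξ Finset.univ (fun _ => 1) f R k (by simpa using h) 0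
  have h2 : wtC p F (fun x => f x.1) = #{x : F | ¬ f x = 0} := by
    unfold wtC
    rw [← Finset.card_map (Function.Embedding.subtype (fun x : F => x ≠ 0))]
    congr 1
    ext x
    simp only [Finset.mem_map, Finset.mem_filter, Finset.mem_univ, true_and,
      Function.Embedding.subtype_apply, Subtype.exists, exists_and_left, exists_prop]
    constructor
    · rintro ⟨a, ha, _, rfl⟩
      exact ha
    · intro hx
      exact ⟨x, hx, fun h0 => hx (by rw [h0, hf]), rfl⟩
  have h3 := Finset.card_filter_add_card_filter_not (s := (Finset.univ : Finset F)) (fun x => f x = 0)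
  rw [← h2, Finset.card_univ] at h3
  have h4 : (#{x : F | f x = 0} : ℤ) + wtC p F (fun x => f x.1) = Fintype.card F := by
    exact_mod_cast h3
  simp only [Finset.sum_const, nsmul_eq_mul, mul_one, Finset.card_univ, eq_comm (a := (0 : ZMod p))] at h1
  linear_combination (p : ℤ) * h4 - h1

theorem half_aux (p n X : ℕ) (hp : 0 < p) (Y : ℤ) (h : 2 * p * (n : ℤ) = Y) (hX : p * (X : ℤ) = Y) :
    n = X / 2 := by
  have h1 : (p : ℤ) * (2 * n) = p * X := by rw [hX, ← h]; ring
  have h2 := mul_left_cancel₀ (by exact_mod_cast hp.ne') h1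
  omega

set_option maxHeartbeats 2000000 in
/-- the weight distribution of `C_Π` for `m` even, `Π` perfect nonlinear with
`Π(0) = 0`, `Π(cx) ≠ cΠ(x)` for `x ≠ 0`, `c ∈ 𝔽_p \ {0,1}`, assuming `p = 3` or
(`Π⁻¹(0) = {0}`, `Π` weakly regular perfect nonlinear, and `a ↦ Π_a*(0)` not surjective);
`C_Π` is a 5-weight code with minimum distance `(p-1)(p^{m-1} - p^{m/2-1})`. -/
theorem stmt_15 (p m : ℕ) [Fact p.Prime] (hp : Odd p) (hm : Even m) (hm0 : 0 < m)
    (F : Type*) [Field F] [Fintype F] [DecidableEq F] [Algebra (ZMod p) F]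
    (hF : Fintype.card F = p ^ m)
    (ξ : ℂ) (hξ : IsPrimitiveRoot ξ p)
    (Pl : F → F)
    (hPN : ∀ a : F, a ≠ 0 → Function.Bijective (fun x : F => Pl (x + a) - Pl x))
    (h0 : Pl 0 = 0)
    (hhom : ∀ x : F, x ≠ 0 → ∀ c : ZMod p, c ≠ 0 → c ≠ 1 →
      Pl (algebraMap (ZMod p) F c * x) ≠ algebraMap (ZMod p) F c * Pl x)
    (hcond : p = 3 ∨
      ((∀ x : F, Pl x = 0 → x = 0) ∧
        ∃ (ε : F → ℤ) (D : F → F → ZMod p),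
          (∀ a : F, a ≠ 0 → (ε a = 1 ∨ ε a = -1) ∧
            ∀ y : F, ∑ x : F,
                ξ ^ (Algebra.trace (ZMod p) F (a * Pl x)
                  + Algebra.trace (ZMod p) F (y * x)).val
              = (ε a : ℂ) * ξ ^ (D a y).val * Real.sqrt (p ^ m)) ∧
          ∃ r : ZMod p, ∀ a : F, a ≠ 0 → D a 0 ≠ r)) :
    ACount p F Pl 0 = 1 ∧
    ACount p F Pl ((p - 1) * (p ^ (m - 1) - p ^ (m / 2 - 1)))
      = (p ^ m - 1) * (p ^ (m - 1) + p ^ (m / 2) - p ^ (m / 2 - 1)) / 2 ∧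
    ACount p F Pl ((p - 1) * p ^ (m - 1) - p ^ (m / 2 - 1))
      = (p ^ m - 1) * (p - 1) * (p ^ (m - 1) + p ^ (m / 2 - 1)) / 2 ∧
    ACount p F Pl ((p - 1) * p ^ (m - 1)) = p ^ m - 1 ∧
    ACount p F Pl ((p - 1) * p ^ (m - 1) + p ^ (m / 2 - 1))
      = (p ^ m - 1) * (p - 1) * (p ^ (m - 1) - p ^ (m / 2 - 1)) / 2 ∧
    ACount p F Pl ((p - 1) * (p ^ (m - 1) + p ^ (m / 2 - 1)))
      = (p ^ m - 1) * (p ^ (m - 1) - p ^ (m / 2) + p ^ (m / 2 - 1)) / 2 ∧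
    (∀ i : ℕ, i ∉ ({0, (p - 1) * (p ^ (m - 1) - p ^ (m / 2 - 1)),
        (p - 1) * p ^ (m - 1) - p ^ (m / 2 - 1), (p - 1) * p ^ (m - 1),
        (p - 1) * p ^ (m - 1) + p ^ (m / 2 - 1),
        (p - 1) * (p ^ (m - 1) + p ^ (m / 2 - 1))} : Set ℕ) →
      ACount p F Pl i = 0) ∧
    (∀ g ∈ CCode p F Pl, g ≠ 0 →
      (p - 1) * (p ^ (m - 1) - p ^ (m / 2 - 1)) ≤ wtC p F g) := by
  have hpp : p.Prime := Fact.out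
  have hp2 : p ≠ 2 := by rintro rfl; revert hp; decide
  have hp3 : 3 ≤ p := by have := hpp.two_le; omega
  obtain ⟨t, rfl⟩ : ∃ t, m = 2 * (t + 1) := by
    obtain ⟨r, rfl⟩ := hm
    exact ⟨r - 1, by omega⟩
  obtain ⟨χ, hχ⟩ : ∃ χ : AddChar (ZMod p) ℂ, ∀ j, χ j = ξ ^ j.val :=
    ⟨AddChar.zmodChar p hξ.pow_eq_one, fun j => AddChar.zmodChar_apply _ j⟩
  obtain ⟨e, k, hek, hsum⟩ := data_aux p t F hF ξ hξ χ hχ Pl hPN h0 hcond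
  have hp0 : (p : ℂ) ≠ 0 := by exact_mod_cast hpp.ne_zero
  have hpz : (p : ℤ) ≠ 0 := by exact_mod_cast hpp.ne_zero
  have hq : p ^ (2 * (t + 1)) = p ^ 2 * (p ^ t) ^ 2 := by ring
  have hs1 : 1 ≤ p ^ t := Nat.one_le_pow _ _ hpp.pos
  have E1 : p ^ (2 * (t + 1) - 1) = p * (p ^ t) ^ 2 := by
    rw [show 2 * (t + 1) - 1 = 1 + t * 2 by omega, pow_add, pow_mul, pow_one]
  have E2 : p ^ (2 * (t + 1) / 2 - 1) = p ^ t := by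
    rw [show 2 * (t + 1) / 2 - 1 = t by omega]
  have E3 : p ^ (2 * (t + 1) / 2) = p * p ^ t := by
    rw [show 2 * (t + 1) / 2 = t + 1 by omega, pow_succ']
  have hr : (p : ℂ) ^ (t + 1) = p * ((p ^ t : ℕ) : ℂ) := by push_cast; ring
  rw [hq] at hF
  rw [E1, E2, E3, hq]
  rw [hr] at hek
  clear hcond
  generalize p ^ t = s at *
  -- the words
  set word : F × F → ({x : F // x ≠ 0} → ZMod p) :=
    fun z x => Algebra.trace (ZMod p) F (z.1 * Pl x.1 + z.2 * x.1) with hword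
  obtain ⟨c, rfl⟩ : ∃ c, p = c + 1 := ⟨p - 1, by omega⟩
  have hc2 : 2 ≤ c := by omega
  rw [Nat.add_sub_cancel, Nat.mul_sub c, Nat.mul_add c]
  obtain ⟨A, hA⟩ : ∃ A, A = c * ((c + 1) * s ^ 2) := ⟨_, rfl⟩
  obtain ⟨B, hB⟩ : ∃ B, B = c * s := ⟨_, rfl⟩
  have hsB : s < B := by rw [hB]; nlinarith
  have hBA : B < A := by
    rw [hA, hB]
    have : s < (c + 1) * s ^ 2 := by nlinarith
    exact Nat.mul_lt_mul_of_pos_left this (by omega)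
  have w1 : ∀ z : F × F, z.1 ≠ 0 →
      ((wtC (c + 1) F (word z) : ℤ) = A + e z * s - if k z = 0 then (c + 1) * e z * s else 0) := by
    intro z hz
    have := wt_aux (c + 1) F ξ hξ χ hχ
      (fun x => Algebra.trace (ZMod (c + 1)) F (z.1 * Pl x + z.2 * x)) (by simp [h0])
      (e z * ((c + 1 : ℕ) * s)) (k z) (by
        rw [(hek z hz).2]; push_cast; ring)
    rw [hF] at this
    apply mul_left_cancel₀ hpz
    rw [hword, this, hA]
    push_cast
    split_ifs <;> ring
  have w1a : ∀ z : F × F, z.1 ≠ 0 → e z = 1 → k z = 0 → wtC (c + 1) F (word z) + B = A := by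
    intro z hz h1 h2
    have := w1 z hz
    rw [h1, h2, if_pos rfl] at this
    zify; rw [this, hB]; push_cast; ring
  have w1b : ∀ z : F × F, z.1 ≠ 0 → e z = -1 → k z = 0 → wtC (c + 1) F (word z) = A + B := by
    intro z hz h1 h2
    have := w1 z hz
    rw [h1, h2, if_pos rfl] at this
    zify; rw [this, hB]; push_cast; ring
  have w1c : ∀ z : F × F, z.1 ≠ 0 → e z = 1 → k z ≠ 0 → wtC (c + 1) F (word z) = A + s := by
    intro z hz h1 h2
    have := w1 z hz
    rw [h1, if_neg h2] at this
    zify; rw [this]; ring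
  have w1d : ∀ z : F × F, z.1 ≠ 0 → e z = -1 → k z ≠ 0 → wtC (c + 1) F (word z) + s = A := by
    intro z hz h1 h2
    have := w1 z hz
    rw [h1, if_neg h2] at this
    zify; rw [this]; ring
  have w2 : ∀ z : F × F, z.1 = 0 → z.2 ≠ 0 → wtC (c + 1) F (word z) = A := by
    intro z hz hz2
    have := wt_aux (c + 1) F ξ hξ χ hχ
      (fun x => Algebra.trace (ZMod (c + 1)) F (z.1 * Pl x + z.2 * x)) (by simp [h0])
      0 0 (by
        simp_rw [hz, zero_mul, zero_add, orth_aux (c + 1) F ξ hξ χ hχ, if_neg hz2]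
        simp)
    rw [hF] at this
    zify
    apply mul_left_cancel₀ hpz
    rw [hword, this, hA]
    push_cast
    simp
    ring
  have w3 : ∀ z : F × F, z.1 = 0 → z.2 = 0 → wtC (c + 1) F (word z) = 0 := by
    intro z hz hz2
    simp [wtC, hword, hz, hz2]
  have inj : Function.Injective word := by
    intro z z' h
    have h1 : wtC (c + 1) F (word (z - z')) = 0 := by
      have : word (z - z') = 0 := by
        funext x
        have hx := congrFun h x
        simp only [hword] at hx ⊢
        rw [Prod.fst_sub, Prod.snd_sub, show (z.1 - z'.1) * Pl x.1 + (z.2 - z'.2) * x.1 =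
          (z.1 * Pl x.1 + z.2 * x.1) - (z'.1 * Pl x.1 + z'.2 * x.1) by ring, map_sub, hx, sub_self]
        rfl
      rw [this]; simp [wtC]
    rw [← sub_eq_zero]
    by_cases hz : (z - z').1 = 0
    · by_cases hz2 : (z - z').2 = 0
      · exact Prod.ext hz hz2
      · have := w2 _ hz hz2; omega
    · exfalso
      rcases (hek _ hz).1 with he | he <;> by_cases hk : k (z - z') = 0
      · have := w1a _ hz he hk; omega
      · have := w1c _ hz he hk; omega
      · have := w1b _ hz he hk; omega
      · have := w1d _ hz he hk; omega
  have hAC : ∀ i, ACount (c + 1) F Pl i = #{z : F × F | wtC (c + 1) F (word z) = i} := by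
    intro i
    unfold ACount
    have : {g : {x : F // x ≠ 0} → ZMod (c + 1) | g ∈ CCode (c + 1) F Pl ∧ wtC (c + 1) F g = i}
        = word '' {z : F × F | wtC (c + 1) F (word z) = i} := by
      ext g
      constructor
      · rintro ⟨⟨a, b, rfl⟩, h⟩
        exact ⟨(a, b), h, rfl⟩
      · rintro ⟨z, hz, rfl⟩
        exact ⟨⟨z.1, z.2, rfl⟩, hz⟩
    rw [this, Nat.card_image_of_injective inj, Nat.card_eq_fintype_card, ← Set.toFinset_card]
    congr 1
    ext z; simp
  -- classification
  have cls : ∀ z : F × F, (z.1 = 0 ∧ z.2 = 0 ∧ wtC (c + 1) F (word z) = 0) ∨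
      (z.1 = 0 ∧ z.2 ≠ 0 ∧ wtC (c + 1) F (word z) = A) ∨
      (z.1 ≠ 0 ∧ e z = 1 ∧ k z = 0 ∧ wtC (c + 1) F (word z) + B = A) ∨
      (z.1 ≠ 0 ∧ e z = -1 ∧ k z = 0 ∧ wtC (c + 1) F (word z) = A + B) ∨
      (z.1 ≠ 0 ∧ e z = 1 ∧ k z ≠ 0 ∧ wtC (c + 1) F (word z) = A + s) ∨
      (z.1 ≠ 0 ∧ e z = -1 ∧ k z ≠ 0 ∧ wtC (c + 1) F (word z) + s = A) := by
    intro z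
    by_cases hz : z.1 = 0
    · by_cases hz2 : z.2 = 0
      · exact Or.inl ⟨hz, hz2, w3 z hz hz2⟩
      · exact Or.inr (Or.inl ⟨hz, hz2, w2 z hz hz2⟩)
    · rcases (hek z hz).1 with he | he <;> by_cases hk : k z = 0
      · exact Or.inr (Or.inr (Or.inl ⟨hz, he, hk, w1a z hz he hk⟩))
      · exact Or.inr (Or.inr (Or.inr (Or.inr (Or.inl ⟨hz, he, hk, w1c z hz he hk⟩))))
      · exact Or.inr (Or.inr (Or.inr (Or.inl ⟨hz, he, hk, w1b z hz he hk⟩)))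
      · exact Or.inr (Or.inr (Or.inr (Or.inr (Or.inr ⟨hz, he, hk, w1d z hz he hk⟩))))
  -- counting
  have hQ1 : 1 ≤ (c + 1) ^ 2 * s ^ 2 := by rw [← hF]; exact Fintype.card_pos
  have hcardS : (#{z : F × F | z.1 ≠ 0} : ℤ)
      = ((c + 1) ^ 2 * s ^ 2 - 1) * ((c + 1) ^ 2 * s ^ 2) := by
    have : ({z : F × F | z.1 ≠ 0} : Finset (F × F)) = (Finset.univ.erase (0 : F)) ×ˢ Finset.univ := by
      ext z; simp
    rw [this, Finset.card_product, Finset.card_erase_of_mem (Finset.mem_univ _), Finset.card_univ,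
      hF]
    push_cast [hQ1]
    ring
  have hsC : (s : ℂ) ≠ 0 := by
    have : s ≠ 0 := by omega
    exact_mod_cast this
  have c1 : ∑ z : F × F with z.1 ≠ 0, (e z : ℂ) * ξ ^ (k z).val
      = ((((c + 1) ^ 2 * s ^ 2 - 1) * ((c + 1) * s) : ℤ) : ℂ) := by
    have h := sum1_aux (c + 1) F ξ hξ χ hχ Pl h0
    rw [Finset.sum_congr rfl (fun z hz => (hek z (Finset.mem_filter.1 hz).2).2),
      ← Finset.sum_mul, hF] at h
    simp_rw [hχ] at h
    apply mul_right_cancel₀ (mul_ne_zero hp0 hsC)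
    rw [h]; push_cast; ring
  have c2 : ∑ z : F × F with z.1 ≠ 0, ξ ^ (2 * k z).val = 0 := by
    have h := sum2_aux (c + 1) hp2 F ξ hξ χ hχ Pl h0 hhom
    have h' : ∀ z ∈ Finset.univ.filter (fun z : F × F => z.1 ≠ 0),
        (∑ x : F, χ (Algebra.trace (ZMod (c + 1)) F (z.1 * Pl x + z.2 * x))) ^ 2
        = ξ ^ (2 * k z).val * (((c + 1 : ℕ) : ℂ) * s) ^ 2 := by
      intro z hz
      obtain ⟨h1, h2⟩ := hek z (Finset.mem_filter.1 hz).2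
      rw [h2, ← hχ, two_mul, AddChar.map_add_eq_mul]
      rcases h1 with h | h <;> rw [h] <;> push_cast <;> ring
    rw [Finset.sum_congr rfl h', ← Finset.sum_mul] at h
    exact (mul_eq_zero.1 h).resolve_right (pow_ne_zero _ (mul_ne_zero hp0 hsC))
  obtain ⟨n1, n2, n3, n4⟩ := count_aux (c + 1) hp2 ξ hξ {z : F × F | z.1 ≠ 0} e k _
    (fun z hz => (hek z (Finset.mem_filter.1 hz).2).1) c1 c2 hsum
  simp only [Finset.filter_filter] at n1 n2 n3 n4
  rw [hcardS] at n1 n2 n3 n4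
  have hs3 : (c + 1) * s ≤ (c + 1) * s ^ 2 :=
    Nat.mul_le_mul_left _ (Nat.le_self_pow two_ne_zero s)
  have hs2 : s ≤ (c + 1) * s ^ 2 :=
    (Nat.le_mul_of_pos_left s (Nat.succ_pos c)).trans hs3
  have hs4 : s ≤ (c + 1) * s ^ 2 + (c + 1) * s := hs2.trans (Nat.le_add_right _ _)
  have F0 : ({z : F × F | wtC (c + 1) F (word z) = 0} : Finset (F × F)) = {0} := by
    ext z
    simp only [Finset.mem_filter, Finset.mem_univ, true_and, Finset.mem_singleton]
    constructor
    · intro h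
      rcases cls z with h' | h' | h' | h' | h' | h'
      · exact Prod.ext h'.1 h'.2.1
      all_goals omega
    · rintro rfl
      exact w3 0 rfl rfl
  have FA : ({z : F × F | wtC (c + 1) F (word z) = A} : Finset (F × F)) =
      {(0 : F)} ×ˢ (Finset.univ.erase (0 : F)) := by
    ext z
    simp only [Finset.mem_filter, Finset.mem_univ, true_and, Finset.mem_product,
      Finset.mem_singleton, Finset.mem_erase, and_true]
    constructor
    · intro h
      rcases cls z with h' | h' | h' | h' | h' | h'
      · omega
      · exact ⟨h'.1, h'.2.1⟩
      all_goals omega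
    · rintro ⟨h1, h2⟩
      exact w2 z h1 h2
  have F1 : ({z : F × F | wtC (c + 1) F (word z) = A - B} : Finset (F × F)) =
      ({z : F × F | z.1 ≠ 0 ∧ e z = 1 ∧ k z = 0} : Finset (F × F)) := by
    ext z
    simp only [Finset.mem_filter, Finset.mem_univ, true_and]
    constructor
    · intro h
      rcases cls z with h' | h' | h' | h' | h' | h' <;>
        first | (exfalso; omega) | exact ⟨h'.1, h'.2.1, h'.2.2.1⟩
    · rintro ⟨h1, h2, h3⟩
      have := w1a z h1 h2 h3
      omega
  have F2 : ({z : F × F | wtC (c + 1) F (word z) = A + B} : Finset (F × F)) =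
      ({z : F × F | z.1 ≠ 0 ∧ e z = -1 ∧ k z = 0} : Finset (F × F)) := by
    ext z
    simp only [Finset.mem_filter, Finset.mem_univ, true_and]
    constructor
    · intro h
      rcases cls z with h' | h' | h' | h' | h' | h' <;>
        first | (exfalso; omega) | exact ⟨h'.1, h'.2.1, h'.2.2.1⟩
    · rintro ⟨h1, h2, h3⟩
      exact w1b z h1 h2 h3
  have F3 : ({z : F × F | wtC (c + 1) F (word z) = A + s} : Finset (F × F)) =
      ({z : F × F | z.1 ≠ 0 ∧ e z = 1 ∧ k z ≠ 0} : Finset (F × F)) := by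
    ext z
    simp only [Finset.mem_filter, Finset.mem_univ, true_and]
    constructor
    · intro h
      rcases cls z with h' | h' | h' | h' | h' | h' <;>
        first | (exfalso; omega) | exact ⟨h'.1, h'.2.1, h'.2.2.1⟩
    · rintro ⟨h1, h2, h3⟩
      exact w1c z h1 h2 h3
  have F4 : ({z : F × F | wtC (c + 1) F (word z) = A - s} : Finset (F × F)) =
      ({z : F × F | z.1 ≠ 0 ∧ e z = -1 ∧ k z ≠ 0} : Finset (F × F)) := by
    ext z
    simp only [Finset.mem_filter, Finset.mem_univ, true_and]
    constructor
    · intro h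
      rcases cls z with h' | h' | h' | h' | h' | h' <;>
        first | (exfalso; omega) | exact ⟨h'.1, h'.2.1, h'.2.2.1⟩
    · rintro ⟨h1, h2, h3⟩
      have := w1d z h1 h2 h3
      omega
  rw [← hA, ← hB]
  refine ⟨?_, ?_, ?_, ?_, ?_, ?_, ?_, ?_⟩
  · rw [hAC, F0, Finset.card_singleton]
  · rw [hAC, F1]
    refine half_aux (c + 1) _ _ (by omega) _ n1 ?_
    push_cast [hQ1, hs4]; ring
  · rw [hAC, F4]
    refine half_aux (c + 1) _ _ (by omega) _ n4 ?_
    push_cast [hQ1]; ring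
  · rw [hAC, FA, Finset.card_product, Finset.card_erase_of_mem (Finset.mem_univ _),
      Finset.card_univ, hF, Finset.card_singleton, one_mul]
  · rw [hAC, F3]
    refine half_aux (c + 1) _ _ (by omega) _ n3 ?_
    push_cast [hQ1, hs2]; ring
  · rw [hAC, F2]
    refine half_aux (c + 1) _ _ (by omega) _ n2 ?_
    push_cast [hQ1, hs3]; ring
  · intro i hi
    simp only [Set.mem_insert_iff, Set.mem_singleton_iff, not_or] at hi
    rw [hAC, Finset.card_eq_zero, Finset.filter_eq_empty_iff]
    intro z _ h
    rcases cls z with h' | h' | h' | h' | h' | h' <;> omega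
  · rintro g ⟨a, b, rfl⟩ hg
    change A - B ≤ wtC (c + 1) F (word (a, b))
    rcases cls (a, b) with h' | h' | h' | h' | h' | h'
    · exfalso
      apply hg
      obtain ⟨h1, h2, _⟩ := h'
      simp only at h1 h2
      funext x
      simp [h1, h2]
    all_goals omega
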